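/- arXiv:1304.5392 — 2 statements merged into one kernel-verified Lean document; each statement's English description precedes it below -/
import Mathlib

section
/- Fix a real number k ≥ 1. The inequality (2/(k+2))·(sin(x)/x)^(k·p) + (k/(k+2))·(tan(x)/x)^p < 1 holds for every x ∈ (0, π/2) if and only if −12/(5(k+2)) ≤ p < 0. -/
open Real Set

/-- The polynomial inequality behind the case `k = 1`. -/
lemma wk_poly (z : ℝ) (h0 : 0 < z) (h1 : z < 1) :
    z ^ 2 * (2 + z ^ 2) ^ 9 < 243 * (1 + 2 * z ^ 3) ^ 4 := by
  have h2 : 0 < 1 - z := by linarith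
  have key : 0 < (1 - z) ^ 3 * (243 + 729 * z + 946 * z ^ 2 + 2838 * z ^ 3 + 4101 * z ^ 4
      + 4735 * z ^ 5 + 5964 * z ^ 6 + 7788 * z ^ 7 + 4831 * z ^ 8 + 4869 * z ^ 9
      + 3870 * z ^ 10 + 1834 * z ^ 11 + 633 * z ^ 12 + 267 * z ^ 13 + 64 * z ^ 14
      + 24 * z ^ 15 + 3 * z ^ 16 + z ^ 17) := by positivity
  nlinarith [key]

/-- The derivative estimate. -/
lemma wk_deriv (y M : ℝ) (h0 : 0 < y) (h1 : y < 1) (hM : M = (2 + y ^ 4) / 3) :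
    0 < y ^ 5 * M ^ (-(5 / 4 : ℝ)) + (1 - y ^ 10) / (3 * y) * M ^ (-(9 / 4 : ℝ)) - 1 := by
  have hMp : 0 < M := by rw [hM]; positivity
  have e1 : M ^ (-(5 / 4 : ℝ)) = M * M ^ (-(9 / 4 : ℝ)) := by
    nth_rewrite 2 [← rpow_one M]
    rw [← rpow_add hMp]; norm_num
  set R := M ^ (-(9 / 4 : ℝ)) with hR
  have hRp : 0 < R := rpow_pos_of_pos hMp _
  have hR4 : R ^ 4 * M ^ 9 = 1 := by
    rw [hR, ← rpow_natCast, ← rpow_mul hMp.le, ← rpow_natCast M 9, ← rpow_add hMp]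
    norm_num
  have e2 : y ^ 5 * (M * R) + (1 - y ^ 10) / (3 * y) * R = (1 + 2 * y ^ 6) / (3 * y) * R := by
    rw [hM]; field_simp; ring
  rw [e1, e2]
  have hp := wk_poly (y ^ 2) (by positivity) (by nlinarith)
  have hA : 0 < (1 + 2 * y ^ 6) / (3 * y) * R := by positivity
  have h4 : 1 < ((1 + 2 * y ^ 6) / (3 * y) * R) ^ 4 := by
    have h9 : 0 < M ^ 9 := by positivity
    have : ((1 + 2 * y ^ 6) / (3 * y) * R) ^ 4 = (1 + 2 * y ^ 6) ^ 4 / ((3 * y) ^ 4 * M ^ 9) := by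
      rw [mul_pow, div_pow, div_mul_eq_mul_div, div_eq_div_iff (by positivity) (by positivity)]
      linear_combination ((1 + 2 * y ^ 6) ^ 4 * (3 * y) ^ 4) * hR4
    rw [this, one_lt_div (by positivity), hM]
    ring_nf at hp ⊢
    linarith
  have : 1 < (1 + 2 * y ^ 6) / (3 * y) * R := by
    by_contra h
    push Not at h
    have := pow_le_one₀ (n := 4) hA.le h
    linarith
  linarith

lemma wk_core (x : ℝ) (hx0 : 0 < x) (hx1 : x < π / 2) :
    x < sin x * ((2 + cos x ^ (4 / 5 : ℝ)) / 3) ^ (-(5 / 4 : ℝ)) := by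
  have hc : ∀ t ∈ Icc 0 x, 0 < cos t := fun t ht =>
    cos_pos_of_mem_Ioo ⟨by linarith [ht.1, pi_pos], by linarith [ht.2]⟩
  have hd : ∀ t ∈ Icc 0 x, HasDerivAt
      (fun t => sin t * ((2 + cos t ^ (4 / 5 : ℝ)) / 3) ^ (-(5 / 4 : ℝ)) - t)
      (cos t * ((2 + cos t ^ (4 / 5 : ℝ)) / 3) ^ (-(5 / 4 : ℝ)) + sin t *
        ((-sin t * (4 / 5 : ℝ) * cos t ^ ((4 / 5 : ℝ) - 1)) / 3 * (-(5 / 4 : ℝ)) *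
          ((2 + cos t ^ (4 / 5 : ℝ)) / 3) ^ (-(5 / 4 : ℝ) - 1)) - 1) t := by
    intro t ht
    have h1 := (hasDerivAt_cos t).rpow_const (p := (4 / 5 : ℝ)) (Or.inl (hc t ht).ne')
    have h2 := (h1.const_add 2).div_const 3
    have hpos : (2 + cos t ^ (4 / 5 : ℝ)) / 3 ≠ 0 := by
      have := rpow_pos_of_pos (hc t ht) (4 / 5); positivity
    have h3 := h2.rpow_const (p := -(5 / 4 : ℝ)) (Or.inl hpos)
    exact ((hasDerivAt_sin t).mul h3).sub (hasDerivAt_id t)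
  have hm := strictMonoOn_of_deriv_pos (convex_Icc 0 x)
    (f := fun t => sin t * ((2 + cos t ^ (4 / 5 : ℝ)) / 3) ^ (-(5 / 4 : ℝ)) - t)
    (fun t ht => (hd t ht).continuousAt.continuousWithinAt) (by
      intro t ht
      rw [interior_Icc] at ht
      have ht' : t ∈ Icc 0 x := ⟨ht.1.le, ht.2.le⟩
      rw [(hd t ht').deriv]
      have hct := hc t ht'
      have hs : 0 < sin t := sin_pos_of_pos_of_lt_pi ht.1 (by linarith [ht.2, pi_pos])
      have hsq := sin_sq_add_cos_sq t
      have hc1 : cos t < 1 := by nlinarith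
      have hyp : 0 < cos t ^ (1 / 5 : ℝ) := rpow_pos_of_pos hct _
      have hy1 : cos t ^ (1 / 5 : ℝ) < 1 := rpow_lt_one hct.le hc1 (by norm_num)
      have y4 : cos t ^ (4 / 5 : ℝ) = (cos t ^ (1 / 5 : ℝ)) ^ 4 := by
        rw [← rpow_natCast, ← rpow_mul hct.le]; norm_num
      have y5 : cos t = (cos t ^ (1 / 5 : ℝ)) ^ 5 := by
        rw [← rpow_natCast, ← rpow_mul hct.le]; norm_num
      have ym : cos t ^ ((4 / 5 : ℝ) - 1) = (cos t ^ (1 / 5 : ℝ))⁻¹ := by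
        rw [← rpow_neg hct.le]; norm_num
      have := wk_deriv _ _ hyp hy1 rfl
      rw [ym, y4]
      have e : (-(5 / 4 : ℝ) - 1) = -(9 / 4 : ℝ) := by norm_num
      rw [e]
      have hs2 : 1 - (cos t ^ (1 / 5 : ℝ)) ^ 10 = sin t ^ 2 := by
        have : (cos t ^ (1 / 5 : ℝ)) ^ 10 = cos t ^ 2 := by
          conv_rhs => rw [y5]
          ring
        linarith
      rw [hs2, ← y5] at this
      refine this.trans_eq ?_
      field_simp)
  have := hm ⟨le_rfl, hx0.le⟩ ⟨hx0.le, le_rfl⟩ hx0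
  simp only [sin_zero, zero_mul, sub_zero] at this
  linarith

/-- The case `k = 1`. -/
lemma wk_one (x : ℝ) (hx0 : 0 < x) (hx1 : x < π / 2) :
    2 * (sin x / x) ^ (-(4 / 5 : ℝ)) + (tan x / x) ^ (-(4 / 5 : ℝ)) < 3 := by
  have hs : 0 < sin x := sin_pos_of_pos_of_lt_pi hx0 (by linarith [pi_pos])
  have hc : 0 < cos x := cos_pos_of_mem_Ioo ⟨by linarith [pi_pos], by linarith⟩
  have hC : 0 < cos x ^ (4 / 5 : ℝ) := rpow_pos_of_pos hc _
  have h := wk_core x hx0 hx1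
  set M := (2 + cos x ^ (4 / 5 : ℝ)) / 3 with hM
  have hMp : 0 < M := by positivity
  have hS : 0 < sin x / x := by positivity
  have e1 : tan x / x = (sin x / x) * (cos x)⁻¹ := by rw [tan_eq_sin_div_cos]; field_simp
  have e2 : ((cos x)⁻¹) ^ (-(4 / 5 : ℝ)) = cos x ^ (4 / 5 : ℝ) := by
    rw [inv_rpow hc.le, rpow_neg hc.le, inv_inv]
  rw [e1, mul_rpow hS.le (by positivity), e2]
  have h2 : M ^ (5 / 4 : ℝ) < sin x / x := by
    rw [rpow_neg hMp.le, ← div_eq_mul_inv, lt_div_iff₀ (by positivity)] at h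
    rw [lt_div_iff₀ hx0]; linarith
  have h3 : M < (sin x / x) ^ (4 / 5 : ℝ) := by
    have := rpow_lt_rpow (z := 4 / 5) (by positivity) h2 (by norm_num)
    rw [← rpow_mul hMp.le] at this
    norm_num at this
    exact this
  rw [rpow_neg hS.le]
  have h4 : 0 < (sin x / x) ^ (4 / 5 : ℝ) := by positivity
  have : ((sin x / x) ^ (4 / 5 : ℝ))⁻¹ * M < 1 := by
    rw [inv_mul_lt_iff₀ h4]; linarith
  rw [hM] at this
  linarith

/-- Reduction of general `k` to `k = 1`. -/
lemma wk_red (τ a : ℝ) (h0 : 0 < τ) (h1 : τ ≤ 1) (ha : 1 ≤ a) (ha2 : a < 3 / 2) :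
    2 * τ / 3 * a ^ (3 - 2 * τ) + (1 - 2 * τ / 3) * (3 - 2 * a) ^ τ ≤ 1 := by
  have hd : ∀ t ∈ Icc 1 a, HasDerivAt
      (fun t : ℝ => 2 * τ / 3 * t ^ (3 - 2 * τ) + (1 - 2 * τ / 3) * (3 - 2 * t) ^ τ)
      (2 * τ / 3 * (1 * (3 - 2 * τ) * t ^ (3 - 2 * τ - 1)) +
        (1 - 2 * τ / 3) * (-(2 * 1) * τ * (3 - 2 * t) ^ (τ - 1))) t := by
    intro t ht
    have hc : 3 - 2 * t ≠ 0 := by linarith [ht.2]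
    have ht0 : t ≠ 0 := by linarith [ht.1]
    exact (((hasDerivAt_id t).rpow_const (p := 3 - 2 * τ) (Or.inl ht0)).const_mul _).add
      (((((hasDerivAt_id t).const_mul 2).const_sub 3).rpow_const (p := τ) (Or.inl hc)).const_mul _)
  have hm := antitoneOn_of_deriv_nonpos (convex_Icc 1 a)
    (f := fun t : ℝ => 2 * τ / 3 * t ^ (3 - 2 * τ) + (1 - 2 * τ / 3) * (3 - 2 * t) ^ τ)
    (fun t ht => (hd t ht).continuousAt.continuousWithinAt)
    (fun t ht => (hd t (interior_subset ht)).differentiableAt.differentiableWithinAt) (by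
      intro t ht
      have ht' := interior_subset ht
      rw [(hd t ht').deriv]
      have hc : 0 < 3 - 2 * t := by linarith [ht'.2]
      have ht0 : 0 < t := by linarith [ht'.1]
      have e1 : t ^ (3 - 2 * τ - 1) = (t ^ 2) ^ (1 - τ) := by
        rw [← rpow_natCast, ← rpow_mul ht0.le]; congr 1; push_cast; ring
      have e2 : (3 - 2 * t) ^ (τ - 1) = ((3 - 2 * t)⁻¹) ^ (1 - τ) := by
        rw [inv_rpow hc.le, ← rpow_neg hc.le]; congr 1; ring
      have h3 : t ^ 2 ≤ (3 - 2 * t)⁻¹ := by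
        rw [← one_div, le_div_iff₀ hc]
        nlinarith [mul_nonneg (sq_nonneg (t - 1)) (by linarith : 0 ≤ 2 * t + 1)]
      have h4 := rpow_le_rpow (by positivity) h3 (by linarith : 0 ≤ 1 - τ)
      rw [e1, e2]
      have : 0 ≤ 2 * τ / 3 * (3 - 2 * τ) := mul_nonneg (by positivity) (by linarith)
      nlinarith [mul_le_mul_of_nonneg_left h4 this])
  have := hm ⟨le_rfl, ha⟩ ⟨ha, le_rfl⟩ ha
  simp only at this
  norm_num at this
  linarith

lemma wk_suff (k : ℝ) (hk : 1 ≤ k) (p : ℝ) (h1 : -(12 / (5 * (k + 2))) ≤ p) (h2 : p < 0)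
    (x : ℝ) (hx0 : 0 < x) (hx1 : x < π / 2) :
    2 / (k + 2) * (sin x / x) ^ (k * p) + k / (k + 2) * (tan x / x) ^ p < 1 := by
  have hs : 0 < sin x := sin_pos_of_pos_of_lt_pi hx0 (by linarith [pi_pos])
  have hT : 0 < tan x := tan_pos_of_pos_of_lt_pi_div_two hx0 hx1
  have hcore := wk_one x hx0 hx1
  have hk2 : 0 < k + 2 := by linarith
  set S := sin x / x with hS
  set T := tan x / x with hTT
  have hSp : 0 < S := by positivity
  have hTp : 0 < T := by positivity
  have hS1 : S ≤ 1 := by rw [hS, div_le_one hx0]; exact sin_le hx0.le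
  set a := S ^ (-(4 / 5 : ℝ)) with ha
  set b := T ^ (-(4 / 5 : ℝ)) with hb
  have hap : 0 < a := rpow_pos_of_pos hSp _
  have hbp : 0 < b := rpow_pos_of_pos hTp _
  have ha1 : 1 ≤ a := one_le_rpow_of_pos_of_le_one_of_nonpos hSp hS1 (by norm_num)
  obtain ⟨τ, hτ⟩ : ∃ τ, τ = 3 / (k + 2) := ⟨_, rfl⟩
  have hτ0 : 0 < τ := by rw [hτ]; positivity
  have hτ1 : τ ≤ 1 := by rw [hτ, div_le_one hk2]; linarith
  have hred := wk_red τ a hτ0 hτ1 ha1 (by linarith)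
  have hbτ : b ^ τ < (3 - 2 * a) ^ τ := rpow_lt_rpow hbp.le (by linarith) hτ0
  have hw1 : 2 / (k + 2) = 2 * τ / 3 := by rw [hτ]; field_simp
  have hw2 : k / (k + 2) = 1 - 2 * τ / 3 := by rw [hτ]; field_simp; ring
  have hw2p : 0 < 1 - 2 * τ / 3 := by linarith
  have hmain : 2 * τ / 3 * a ^ (3 - 2 * τ) + (1 - 2 * τ / 3) * b ^ τ < 1 := by
    nlinarith [mul_lt_mul_of_pos_left hbτ hw2p]
  obtain ⟨l, hl⟩ : ∃ l, l = -p * (5 * (k + 2)) / 12 := ⟨_, rfl⟩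
  have hl0 : 0 < l := by rw [hl]; have : 0 < -p := by linarith
                         positivity
  have hl1 : l ≤ 1 := by
    rw [hl, div_le_one (by norm_num), ← le_div_iff₀ (by positivity)]; linarith
  have eS : S ^ (k * p) = (a ^ (3 - 2 * τ)) ^ l := by
    rw [ha, ← rpow_mul hSp.le, ← rpow_mul hSp.le]; congr 1
    rw [hl, hτ]; field_simp; ring
  have eT : T ^ p = (b ^ τ) ^ l := by
    rw [hb, ← rpow_mul hTp.le, ← rpow_mul hTp.le]; congr 1
    rw [hl, hτ]; field_simp; ring
  set A := a ^ (3 - 2 * τ) with hA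
  set B := b ^ τ with hB
  have hAp : 0 < A := rpow_pos_of_pos hap _
  have hBp : 0 < B := rpow_pos_of_pos hbp _
  have bA := rpow_one_add_le_one_add_mul_self (s := A - 1) (by linarith) hl0.le hl1
  have bB := rpow_one_add_le_one_add_mul_self (s := B - 1) (by linarith) hl0.le hl1
  rw [add_sub_cancel] at bA bB
  rw [eS, eT, hw1, hw2]
  have hw1p : 0 < 2 * τ / 3 := by positivity
  have c1 := mul_le_mul_of_nonneg_left bA hw1p.le
  have c2 := mul_le_mul_of_nonneg_left bB hw2p.le
  have c3 := mul_lt_mul_of_pos_left hmain hl0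
  nlinarith

lemma wk_mono (f f' : ℝ → ℝ) (hd : ∀ t, HasDerivAt f (f' t) t) (h0 : f 0 = 0)
    (hn : ∀ t, 0 ≤ t → 0 ≤ f' t) (x : ℝ) (hx : 0 ≤ x) : 0 ≤ f x := by
  have hm := monotoneOn_of_deriv_nonneg (convex_Ici (0 : ℝ)) (f := f)
    (fun t _ => (hd t).continuousAt.continuousWithinAt)
    (fun t _ => (hd t).differentiableAt.differentiableWithinAt)
    (fun t ht => by rw [(hd t).deriv]; exact hn t (interior_subset ht))
  have := hm (mem_Ici.2 le_rfl) (mem_Ici.2 hx) hx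
  linarith

lemma wk_b1 (x : ℝ) (hx : 0 ≤ x) : 0 ≤ sin x - (x - x ^ 3 / 6) := by
  refine wk_mono (fun x => sin x - (x - x ^ 3 / 6)) (fun x => cos x - (1 - x ^ 2 / 2))
    (fun t => ?_) (by simp) (fun t _ => by linarith [one_sub_sq_div_two_le_cos (x := t)]) x hx
  have := (hasDerivAt_sin t).sub ((hasDerivAt_id t).sub ((hasDerivAt_pow 3 t).div_const 6))
  refine this.congr_deriv ?_
  norm_num; ring

lemma wk_b2 (x : ℝ) (hx : 0 ≤ x) : 0 ≤ 1 - x ^ 2 / 2 + x ^ 4 / 24 - cos x := by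
  refine wk_mono (fun x => 1 - x ^ 2 / 2 + x ^ 4 / 24 - cos x)
    (fun x => sin x - (x - x ^ 3 / 6)) (fun t => ?_) (by simp) wk_b1 x hx
  have := ((((hasDerivAt_pow 2 t).div_const 2).const_sub 1).add
    ((hasDerivAt_pow 4 t).div_const 24)).sub (hasDerivAt_cos t)
  refine this.congr_deriv ?_
  norm_num; ring

lemma wk_b3 (x : ℝ) (hx : 0 ≤ x) : 0 ≤ x - x ^ 3 / 6 + x ^ 5 / 120 - sin x := by
  refine wk_mono (fun x => x - x ^ 3 / 6 + x ^ 5 / 120 - sin x)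
    (fun x => 1 - x ^ 2 / 2 + x ^ 4 / 24 - cos x) (fun t => ?_) (by simp) wk_b2 x hx
  have := (((hasDerivAt_id t).sub ((hasDerivAt_pow 3 t).div_const 6)).add
    ((hasDerivAt_pow 5 t).div_const 120)).sub (hasDerivAt_sin t)
  refine this.congr_deriv ?_
  norm_num; ring

lemma wk_b4 (x : ℝ) (hx : 0 ≤ x) :
    0 ≤ cos x - (1 - x ^ 2 / 2 + x ^ 4 / 24 - x ^ 6 / 720) := by
  refine wk_mono (fun x => cos x - (1 - x ^ 2 / 2 + x ^ 4 / 24 - x ^ 6 / 720))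
    (fun x => x - x ^ 3 / 6 + x ^ 5 / 120 - sin x) (fun t => ?_) (by simp) wk_b3 x hx
  have := (hasDerivAt_cos t).sub (((((hasDerivAt_pow 2 t).div_const 2).const_sub 1).add
    ((hasDerivAt_pow 4 t).div_const 24)).sub ((hasDerivAt_pow 6 t).div_const 720))
  refine this.congr_deriv ?_
  norm_num; ring

lemma wk_e1 (x : ℝ) (hx : 0 ≤ x) : 0 ≤ 1 - x + x ^ 2 / 2 - exp (-x) := by
  refine wk_mono (fun x => 1 - x + x ^ 2 / 2 - exp (-x))
    (fun x => -1 + x + exp (-x)) (fun t => ?_) (by simp)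
    (fun t _ => by linarith [add_one_le_exp (-t)]) x hx
  have := ((((hasDerivAt_id t).const_sub 1).add
    ((hasDerivAt_pow 2 t).div_const 2))).sub (hasDerivAt_neg t).exp
  refine this.congr_deriv ?_
  norm_num

lemma wk_e2 (x : ℝ) (hx : 0 ≤ x) : 0 ≤ exp (-x) - (1 - x + x ^ 2 / 2 - x ^ 3 / 6) := by
  refine wk_mono (fun x => exp (-x) - (1 - x + x ^ 2 / 2 - x ^ 3 / 6))
    (fun x => 1 - x + x ^ 2 / 2 - exp (-x)) (fun t => ?_) (by simp) wk_e1 x hx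
  have := (hasDerivAt_neg t).exp.sub (((((hasDerivAt_id t).const_sub 1).add
    ((hasDerivAt_pow 2 t).div_const 2))).sub ((hasDerivAt_pow 3 t).div_const 6))
  refine this.congr_deriv ?_
  norm_num; ring

/-- `p > 0` is impossible. -/
lemma wk_pos (k : ℝ) (hk : 1 ≤ k) (p : ℝ) (hp : 0 < p) :
    1 ≤ 2 / (k + 2) * (sin (π / 4) / (π / 4)) ^ (k * p)
      + k / (k + 2) * (tan (π / 4) / (π / 4)) ^ p := by
  have hs : 0 < sin (π / 4) := sin_pos_of_pos_of_lt_pi (by positivity) (by linarith [pi_pos])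
  have hk2 : 0 < k + 2 := by linarith
  rw [tan_pi_div_four]
  have hT : 0 < 1 / (π / 4) := by positivity
  have hS : 0 < sin (π / 4) / (π / 4) := by positivity
  have hlog : 0 ≤ 2 * log (sin (π / 4) / (π / 4)) + log (1 / (π / 4)) := by
    have : 2 * log (sin (π / 4) / (π / 4)) + log (1 / (π / 4))
        = log ((sin (π / 4) / (π / 4)) ^ 2 * (1 / (π / 4))) := by
      rw [log_mul (by positivity) (by positivity), log_pow]; norm_num
    rw [this]
    apply log_nonneg
    have h2 : sin (π / 4) ^ 2 = 1 / 2 := by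
      rw [sin_pi_div_four, div_pow, sq_sqrt (by norm_num)]; norm_num
    have h3 : π ^ 3 ≤ 32 := by
      have : π ^ 3 ≤ 3.15 ^ 3 := pow_le_pow_left₀ pi_pos.le pi_lt_d2.le 3
      norm_num at this
      linarith
    rw [div_pow, h2]
    have : (1 / 2 / (π / 4) ^ 2 * (1 / (π / 4)) : ℝ) = 32 / π ^ 3 := by field_simp; norm_num
    rw [this, one_le_div (by positivity)]; exact h3
  rw [rpow_def_of_pos hS, rpow_def_of_pos hT]
  set u := log (sin (π / 4) / (π / 4))
  set v := log (1 / (π / 4))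
  have b1 := add_one_le_exp (u * (k * p))
  have b2 := add_one_le_exp (v * p)
  have : 1 = 2 / (k + 2) + k / (k + 2) := by field_simp; ring
  rw [div_mul_eq_mul_div, div_mul_eq_mul_div, ← add_div, one_le_div hk2]
  have hkp : 0 < k * p := by positivity
  nlinarith [mul_nonneg hkp.le hlog]

set_option maxHeartbeats 1000000 in
/-- `p < -12/(5(k+2))` is impossible. -/
lemma wk_neg (k : ℝ) (hk : 1 ≤ k) (q : ℝ) (hq : 12 / (5 * (k + 2)) < q) :
    ∃ x ∈ Ioo (0 : ℝ) (π / 2),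
      1 ≤ 2 / (k + 2) * (sin x / x) ^ (k * (-q)) + k / (k + 2) * (tan x / x) ^ (-q) := by
  have hk2 : 0 < k + 2 := by linarith
  have hq0 : 0 < q := lt_trans (by positivity) hq
  have hqk : 12 / 5 < (k + 2) * q := by
    rw [div_lt_iff₀ (by positivity)] at hq; linarith
  -- choose a small `x`
  have hcont : ContinuousAt (fun x : ℝ =>
      ((k + 2) * q - 4 / 3 * q ^ 2 * x ^ 2) * (1 / 6 - x ^ 2 / 120) ^ 2
        * (1 - x ^ 2 / 2 + x ^ 4 / 24 - x ^ 6 / 720)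
      - (1 / 15 - 11 / 4320 * x ^ 2 + x ^ 2 / 10)) 0 := by fun_prop
  have hev := hcont.eventually (lt_mem_nhds (a := 0) (by norm_num; linarith))
  have hev2 : ∀ᶠ x : ℝ in nhds 0, 0 < (k + 2) * q - 4 / 3 * q ^ 2 * x ^ 2 := by
    have : ContinuousAt (fun x : ℝ => (k + 2) * q - 4 / 3 * q ^ 2 * x ^ 2) 0 := by fun_prop
    exact this.eventually (lt_mem_nhds (a := 0) (by norm_num; positivity))
  have hev3 : ∀ᶠ x : ℝ in nhds 0, x < 1 := gt_mem_nhds one_pos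
  obtain ⟨x, ⟨⟨h1, h2⟩, hx1⟩, hx0⟩ := (((hev.and hev2).and hev3).filter_mono
    nhdsWithin_le_nhds |>.and (self_mem_nhdsWithin (s := Ioi (0 : ℝ)))).exists
  have hx0 : 0 < x := hx0
  have hxpi : x < π / 2 := by linarith [pi_gt_three]
  refine ⟨x, ⟨hx0, hxpi⟩, ?_⟩
  have hs : 0 < sin x := sin_pos_of_pos_of_lt_pi hx0 (by linarith [pi_pos])
  have hc : 0 < cos x := cos_pos_of_mem_Ioo ⟨by linarith [pi_pos], by linarith⟩
  have hT : 0 < tan x := tan_pos_of_pos_of_lt_pi_div_two hx0 hxpi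
  set S := sin x / x with hS
  set T := tan x / x with hTT
  have hSp : 0 < S := by positivity
  have hTp : 0 < T := by positivity
  have hx2 : x ^ 2 < 1 := by nlinarith
  have hx2p : 0 < x ^ 2 := by positivity
  have hSu : S ≤ 1 - x ^ 2 / 6 + x ^ 4 / 120 := by
    rw [hS, div_le_iff₀ hx0]; nlinarith [wk_b3 x hx0.le]
  have hSl : 1 - x ^ 2 / 6 ≤ S := by
    rw [hS, le_div_iff₀ hx0]; nlinarith [wk_b1 x hx0.le]
  have hcl := wk_b4 x hx0.le
  have hC : 0 < 1 - x ^ 2 / 2 + x ^ 4 / 24 - x ^ 6 / 720 := by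
    have : x ^ 6 = x ^ 4 * x ^ 2 := by ring
    nlinarith [pow_pos hx0 4]
  obtain ⟨u, hu⟩ : ∃ u, u = -log S := ⟨_, rfl⟩
  obtain ⟨d, hd⟩ : ∃ d, d = 2 * log S + log T := ⟨_, rfl⟩
  have hul : x ^ 2 * (1 / 6 - x ^ 2 / 120) ≤ u := by
    have := log_le_sub_one_of_pos hSp
    rw [hu]; nlinarith
  have huu : u ≤ x ^ 2 := by
    have := one_sub_inv_le_log_of_pos hSp
    have h5 : S⁻¹ ≤ 1 + x ^ 2 := by
      rw [← one_div, div_le_iff₀ hSp]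
      nlinarith
    rw [hu]; linarith
  have hu0 : 0 ≤ u := le_trans (by apply mul_nonneg hx2p.le; linarith) hul
  have hdS : d = log (S ^ 3 / cos x) := by
    have : T = S / cos x := by rw [hTT, hS, tan_eq_sin_div_cos]; field_simp
    rw [hd, this, log_div hSp.ne' hc.ne', log_div (by positivity) hc.ne', log_pow]
    push_cast; ring
  have hdu : d * (1 - x ^ 2 / 2 + x ^ 4 / 24 - x ^ 6 / 720)
      ≤ x ^ 4 * (1 / 15 - 11 / 4320 * x ^ 2 + x ^ 2 / 10) := by
    have h5 := log_le_sub_one_of_pos (x := S ^ 3 / cos x) (by positivity)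
    rw [← hdS] at h5
    have h6 : S ^ 3 ≤ (1 - x ^ 2 / 6 + x ^ 4 / 120) ^ 3 := pow_le_pow_left₀ hSp.le hSu 3
    have h7 : S ^ 3 / cos x ≤ (1 - x ^ 2 / 6 + x ^ 4 / 120) ^ 3 /
        (1 - x ^ 2 / 2 + x ^ 4 / 24 - x ^ 6 / 720) :=
      div_le_div₀ (le_trans (by positivity) h6) h6 hC (by linarith)
    have h8 := mul_le_mul_of_nonneg_right (h5.trans (sub_le_sub_right h7 1)) hC.le
    rw [sub_mul, div_mul_cancel₀ _ hC.ne'] at h8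
    refine h8.trans ?_
    obtain ⟨t, ht⟩ : ∃ t, t = x ^ 2 := ⟨_, rfl⟩
    have t4 : x ^ 4 = t ^ 2 := by rw [ht]; ring
    have t6 : x ^ 6 = t ^ 3 := by rw [ht]; ring
    rw [t4, t6, ← ht]
    rw [← ht] at hx2 hx2p
    have t1 : t ^ 4 ≤ t ^ 3 := pow_le_pow_of_le_one hx2p.le hx2.le (by norm_num)
    have t2 : t ^ 5 ≤ t ^ 3 := pow_le_pow_of_le_one hx2p.le hx2.le (by norm_num)
    have t3 : t ^ 6 ≤ t ^ 3 := pow_le_pow_of_le_one hx2p.le hx2.le (by norm_num)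
    have p3 : 0 < t ^ 3 := by positivity
    have p4 : 0 < t ^ 4 := by positivity
    have p5 : 0 < t ^ 5 := by positivity
    have p6 : 0 < t ^ 6 := by positivity
    ring_nf
    linarith
  have hkey : d ≤ ((k + 2) * q - 4 / 3 * q ^ 2 * x ^ 2) * u ^ 2 := by
    have h5 : (x ^ 2 * (1 / 6 - x ^ 2 / 120)) ^ 2 ≤ u ^ 2 :=
      pow_le_pow_left₀ (by apply mul_nonneg hx2p.le; linarith) hul 2
    have h6 := mul_le_mul_of_nonneg_left h5 h2.le
    refine le_trans ?_ h6
    refine le_of_mul_le_mul_right (hdu.trans ?_) hC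
    have h7 := mul_pos (pow_pos hx0 4) h1
    linarith [h7]
  rw [rpow_def_of_pos hSp, rpow_def_of_pos hTp]
  have a1 : log S * (k * -q) = k * q * u := by rw [hu]; ring
  have a2 : log T * -q = -(2 * q * u) + -(q * d) := by rw [hu, hd]; ring
  rw [a1, a2, exp_add]
  have b1 := quadratic_le_exp_of_nonneg (x := k * q * u) (by positivity)
  have b2 := wk_e2 (2 * q * u) (by positivity)
  have b3 := add_one_le_exp (-(q * d))
  have b4 : exp (-(2 * q * u)) ≤ 1 := exp_le_one_iff.2 (by
    have : 0 ≤ 2 * q * u := by positivity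
    linarith)
  have b5 : 0 < exp (-(2 * q * u)) := exp_pos _
  set E := exp (-(2 * q * u))
  have hd0 : E * (q * d) ≤ q * (((k + 2) * q - 4 / 3 * q ^ 2 * x ^ 2) * u ^ 2) := by
    have h5 : 0 ≤ q * (((k + 2) * q - 4 / 3 * q ^ 2 * x ^ 2) * u ^ 2) := by positivity
    calc E * (q * d) ≤ E * (q * (((k + 2) * q - 4 / 3 * q ^ 2 * x ^ 2) * u ^ 2)) := by gcongr
      _ ≤ _ := mul_le_of_le_one_left h5 b4
  have b6 := mul_le_mul_of_nonneg_left b3 b5.le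
  have b7 : u ^ 3 ≤ x ^ 2 * u ^ 2 := by
    nlinarith [mul_le_mul_of_nonneg_right huu (sq_nonneg u)]
  rw [div_mul_eq_mul_div, div_mul_eq_mul_div, ← add_div, one_le_div hk2]
  have b8 : 1 - 2 * q * u + 2 * q ^ 2 * u ^ 2 - 4 / 3 * q ^ 3 * (x ^ 2 * u ^ 2)
      - q * (((k + 2) * q - 4 / 3 * q ^ 2 * x ^ 2) * u ^ 2) ≤ E * exp (-(q * d)) := by
    have := mul_le_mul_of_nonneg_left b7 (by positivity : 0 ≤ 4 / 3 * q ^ 3)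
    linarith
  have b9 := mul_le_mul_of_nonneg_left b8 (by linarith : 0 ≤ k)
  linarith

theorem wilker_trig_lt (k : ℝ) (hk : 1 ≤ k) (p : ℝ) (hp : p ≠ 0) :
    (∀ x ∈ Ioo (0 : ℝ) (π / 2),
        2 / (k + 2) * (sin x / x) ^ (k * p) + k / (k + 2) * (tan x / x) ^ p < 1) ↔
      (-(12 / (5 * (k + 2))) ≤ p ∧ p < 0) := by
  constructor
  · intro h
    constructor
    · by_contra hlt
      push Not at hlt
      obtain ⟨x, hx, hge⟩ := wk_neg k hk (-p) (by linarith)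
      rw [neg_neg] at hge
      exact absurd (h x hx) (not_lt.2 hge)
    · by_contra hge
      have hpos : 0 < p := lt_of_le_of_ne (not_lt.1 hge) hp.symm
      have := h (π / 4) ⟨by positivity, by linarith [pi_pos]⟩
      linarith [wk_pos k hk p hpos]
  · rintro ⟨h1, h2⟩ x ⟨hx0, hx1⟩
    exact wk_suff k hk p h1 h2 x hx0 hx1
end

section
/- Fix a real number k < −2. The inequality (2/(k+2))·(sinh(x)/x)^(k·p) + (k/(k+2))·(tanh(x)/x)^p < 1 holds for every x ∈ (0, ∞) if and only if p < 0 or p ≥ −12/(5(k+2)). -/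
open Real Set

lemma wk_sinh (y : ℝ) : HasSum (fun n : ℕ => y ^ (2 * n + 1) / ((2 * n + 1).factorial : ℝ)) (sinh y) :=
  Real.hasSum_sinh y

lemma wk_fac1 (n : ℕ) : ((2 * n + 1).factorial : ℝ) = (2 * n + 1) * ((2 * n).factorial : ℝ) := by
  rw [Nat.factorial_succ]; push_cast; ring

lemma wk_fac3 (n : ℕ) : ((2 * (n + 1) + 1).factorial : ℝ)
    = (2 * n + 3) * (2 * n + 2) * ((2 * n + 1).factorial : ℝ) := by
  rw [show 2 * (n + 1) + 1 = (2 * n + 1) + 1 + 1 by ring, Nat.factorial_succ, Nat.factorial_succ]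
  push_cast; ring

lemma wk_ycosh (y : ℝ) : HasSum (fun n : ℕ => (2 * (n : ℝ) + 1) *
    (y ^ (2 * n + 1) / ((2 * n + 1).factorial : ℝ))) (y * cosh y) := by
  have h := (Real.hasSum_cosh y).mul_left y
  refine h.congr_fun ?_ |> id
  intro n
  rw [wk_fac1]
  have : ((2 * n).factorial : ℝ) ≠ 0 := by positivity
  have : (2 * (n : ℝ) + 1) ≠ 0 := by positivity
  field_simp
  try ring

lemma wk_y2sinh (y : ℝ) : HasSum (fun n : ℕ => (2 * (n : ℝ) + 1) * (2 * n) *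
    (y ^ (2 * n + 1) / ((2 * n + 1).factorial : ℝ))) (y ^ 2 * sinh y) := by
  have h := (wk_sinh y).mul_left (y ^ 2)
  rw [← hasSum_nat_add_iff' 1]
  simp only [Finset.sum_range_one, Nat.cast_zero, mul_zero, zero_mul, sub_zero]
  refine h.congr_fun ?_ |> id
  intro n
  rw [wk_fac3]
  have : ((2 * n + 1).factorial : ℝ) ≠ 0 := by positivity
  have : (2 * (n : ℝ) + 3) ≠ 0 := by positivity
  have : (2 * (n : ℝ) + 2) ≠ 0 := by positivity
  push_cast
  field_simp
  try ring

lemma wk_y3cosh (y : ℝ) : HasSum (fun n : ℕ => (2 * (n : ℝ) + 1) * (2 * n) * (2 * n - 1) *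
    (y ^ (2 * n + 1) / ((2 * n + 1).factorial : ℝ))) (y ^ 3 * cosh y) := by
  have h := (wk_ycosh y).mul_left (y ^ 2)
  rw [← hasSum_nat_add_iff' 1]
  simp only [Finset.sum_range_one, Nat.cast_zero, mul_zero, zero_mul, sub_zero]
  rw [show y ^ 3 * cosh y = y ^ 2 * (y * cosh y) by ring]
  refine h.congr_fun ?_ |> id
  intro n
  rw [wk_fac3]
  have : ((2 * n + 1).factorial : ℝ) ≠ 0 := by positivity
  have : (2 * (n : ℝ) + 3) ≠ 0 := by positivity
  have : (2 * (n : ℝ) + 2) ≠ 0 := by positivity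
  push_cast
  field_simp
  try ring

lemma wk_pow4 (n : ℕ) : 0 ≤ (3 : ℝ) * 4 ^ (n + 2) - 3 - 3 * (2 * (n + 2 : ℝ) + 1)
    + 9 / 4 * ((2 * (n + 2 : ℝ) + 1) * (2 * (n + 2)))
    - 5 / 4 * ((2 * (n + 2 : ℝ) + 1) * (2 * (n + 2)) * (2 * (n + 2) - 1)) := by
  rcases n with _ | _ | n
  · norm_num
  · norm_num
  · induction n with
    | zero => norm_num
    | succ n ih =>
      push_cast at ih ⊢
      rw [pow_succ]
      have : (0 : ℝ) ≤ n := n.cast_nonneg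
      have : (0 : ℝ) ≤ (n : ℝ) ^ 2 := by positivity
      have : (0 : ℝ) ≤ (n : ℝ) ^ 3 := by positivity
      nlinarith

lemma wk_key (y : ℝ) (hy : 0 ≤ y) : 0 ≤ 3 / 2 * sinh (2 * y) - 3 * sinh y - 3 * (y * cosh y) + 3 * y
    + 9 / 4 * (y ^ 2 * sinh y) - y ^ 3 - 5 / 4 * (y ^ 3 * cosh y) := by
  have h := (((((wk_sinh (2 * y)).mul_left (3 / 2)).sub ((wk_sinh y).mul_left 3)).sub
    ((wk_ycosh y).mul_left 3)).add ((wk_y2sinh y).mul_left (9 / 4))).sub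
    ((wk_y3cosh y).mul_left (5 / 4))
  have h2 := sum_le_hasSum (Finset.range 2) (fun i hi => ?_) h
  · simp [Finset.sum_range_succ, Nat.factorial] at h2
    nlinarith
  · simp only [Finset.mem_range, not_lt] at hi
    obtain ⟨n, rfl⟩ := Nat.exists_eq_add_of_le' hi
    have := mul_nonneg (wk_pow4 n) (show 0 ≤ y ^ (2 * (n + 2) + 1) / ((2 * (n + 2) + 1).factorial : ℝ) by positivity)
    refine this.trans_eq ?_
    rw [mul_pow, pow_succ 2, pow_mul 2 2]
    push_cast
    ring

lemma wk_pow9 (n : ℕ) : 0 ≤ (3 : ℝ) * 9 ^ n - 3 -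
    4 * ((2 * (n : ℝ) + 1) * (2 * n) * (2 * n - 1)) := by
  rcases n with _ | _ | n
  · norm_num
  · norm_num
  · induction n with
    | zero => norm_num
    | succ n ih =>
      push_cast at ih ⊢
      rw [pow_succ]
      have : (0 : ℝ) ≤ n := n.cast_nonneg
      have : (0 : ℝ) ≤ (n : ℝ) ^ 2 := by positivity
      have : (0 : ℝ) ≤ (n : ℝ) ^ 3 := by positivity
      nlinarith

lemma wk_cube (x : ℝ) (hx : 0 ≤ x) : x ^ 3 * cosh x + x ^ 7 / 15 ≤ sinh x ^ 3 := by
  have h := (((wk_sinh (3 * x))).sub ((wk_sinh x).mul_left 3)).sub ((wk_y3cosh x).mul_left 4)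
  have h2 := sum_le_hasSum (Finset.range 4) (fun n hi => ?_) h
  · rw [Real.sinh_three_mul] at h2
    simp [Finset.sum_range_succ, Nat.factorial] at h2
    nlinarith
  · have := mul_nonneg (wk_pow9 n) (show 0 ≤ x ^ (2 * n + 1) / ((2 * n + 1).factorial : ℝ) by positivity)
    refine this.trans_eq ?_
    rw [mul_pow, pow_succ 3, pow_mul 3 2]
    push_cast
    ring

lemma wk_fac6 (n : ℕ) : (6 : ℝ) ^ n * (n.factorial : ℝ) ≤ ((2 * n + 1).factorial : ℝ) := by
  induction n with
  | zero => simp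
  | succ n ih =>
    rw [wk_fac3, Nat.factorial_succ, pow_succ]
    push_cast
    have : (0 : ℝ) ≤ n := n.cast_nonneg
    calc (6 : ℝ) ^ n * 6 * ((n + 1) * (n.factorial : ℝ)) = (6 * (n + 1)) * (6 ^ n * (n.factorial : ℝ)) := by ring
      _ ≤ ((2 * n + 3) * (2 * n + 2)) * ((2 * n + 1).factorial : ℝ) := by
        apply mul_le_mul _ ih (by positivity) (by positivity)
        nlinarith

lemma wk_sinh_le (x : ℝ) (hx : 0 ≤ x) : sinh x ≤ x * exp (x ^ 2 / 6) := by
  have h1 := wk_sinh x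
  have h2 : HasSum (fun n : ℕ => x * ((x ^ 2 / 6) ^ n / (n.factorial : ℝ))) (x * exp (x ^ 2 / 6)) := by
    apply HasSum.mul_left
    have := NormedSpace.expSeries_div_hasSum_exp (x ^ 2 / 6)
    rwa [← Real.exp_eq_exp_ℝ] at this
  refine hasSum_le (fun n => ?_) h1 h2
  have e : x * ((x ^ 2 / 6) ^ n / (n.factorial : ℝ)) = x ^ (2 * n + 1) / (6 ^ n * (n.factorial : ℝ)) := by
    rw [div_pow, ← pow_mul, pow_succ]
    field_simp
  rw [e]
  exact div_le_div_of_nonneg_left (by positivity) (by positivity) (wk_fac6 n)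

noncomputable def wkA (x : ℝ) : ℝ := log (sinh x) - log x
noncomputable def wkB (x : ℝ) : ℝ := log x + log (cosh x) - log (sinh x)

lemma wkA_pos (x : ℝ) (hx : 0 < x) : 0 < wkA x :=
  sub_pos.2 (log_lt_log hx (Real.self_lt_sinh_iff.2 hx))

lemma wkA_le (x : ℝ) (hx : 0 < x) : wkA x ≤ x ^ 2 / 6 := by
  have h := log_le_log (sinh_pos_iff.2 hx) (wk_sinh_le x hx.le)
  rw [log_mul hx.ne' (exp_pos _).ne', log_exp] at h
  unfold wkA; linarith

lemma wkAB (x : ℝ) (hx : 0 < x) : x ^ 4 / 15 / (cosh x + x ^ 4 / 15) ≤ 2 * wkA x - wkB x := by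
  have hs := sinh_pos_iff.2 hx
  have hc := cosh_pos x
  have h := wk_cube x hx.le
  have e : 2 * wkA x - wkB x = - log (x ^ 3 * cosh x / sinh x ^ 3) := by
    rw [log_div (by positivity) (by positivity), log_mul (by positivity) (by positivity), log_pow, log_pow]
    unfold wkA wkB; push_cast; ring
  rw [e]
  have h1 := log_le_sub_one_of_pos (show 0 < x ^ 3 * cosh x / sinh x ^ 3 by positivity)
  have h2 : x ^ 3 * cosh x / sinh x ^ 3 ≤ x ^ 3 * cosh x / (x ^ 3 * cosh x + x ^ 7 / 15) :=
    div_le_div_of_nonneg_left (by positivity) (by positivity) h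
  have h3 : x ^ 3 * cosh x / (x ^ 3 * cosh x + x ^ 7 / 15) = 1 - x ^ 4 / 15 / (cosh x + x ^ 4 / 15) := by
    field_simp
    ring
  linarith

lemma wkB_ge (x : ℝ) (hx : 0 < x) : x ^ 2 / 2 / (1 + x ^ 2 / 2) - x ^ 2 / 6 ≤ wkB x := by
  have h := wkA_le x hx
  have h1 : 1 + x ^ 2 / 2 ≤ cosh x := by
    have h1 := Real.self_lt_sinh_iff.2 (show 0 < x / 2 by positivity)
    have h2 := Real.cosh_two_mul (x / 2)
    rw [show 2 * (x / 2) = x by ring, Real.cosh_sq] at h2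
    nlinarith
  have h2 := log_le_log (by positivity) h1
  have h3 := one_sub_inv_le_log_of_pos (show 0 < 1 + x ^ 2 / 2 by positivity)
  have h4 : x ^ 2 / 2 / (1 + x ^ 2 / 2) = 1 - (1 + x ^ 2 / 2)⁻¹ := by field_simp; ring
  unfold wkA at h
  unfold wkB
  linarith

lemma wkA_deriv (x : ℝ) (hx : 0 < x) : HasDerivAt wkA (cosh x / sinh x - 1 / x) x := by
  have hs := sinh_pos_iff.2 hx
  have := ((Real.hasDerivAt_sinh x).log hs.ne').sub (Real.hasDerivAt_log hx.ne')
  rw [one_div]; exact this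

lemma wkB_deriv (x : ℝ) (hx : 0 < x) :
    HasDerivAt wkB (1 / x + sinh x / cosh x - cosh x / sinh x) x := by
  have hs := sinh_pos_iff.2 hx
  have hc := cosh_pos x
  have := ((Real.hasDerivAt_log hx.ne').add ((Real.hasDerivAt_cosh x).log hc.ne')).sub
    ((Real.hasDerivAt_sinh x).log hs.ne')
  rw [one_div]; exact this

lemma wk_dineq (x : ℝ) (hx : 0 < x) : 0 ≤ 6 / 5 * (1 / x + sinh x / cosh x - cosh x / sinh x)
    + exp (-(12 / 5) * wkA x) * (-(12 / 5) * (cosh x / sinh x - 1 / x)) := by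
  have hs := sinh_pos_iff.2 hx
  have hc := cosh_pos x
  have hsx := Real.self_lt_sinh_iff.2 hx
  set E := exp (-(12 / 5) * wkA x) with hE
  have hEpos : 0 < E := exp_pos _
  -- Bernoulli
  have hS2 : exp (2 * wkA x) = (sinh x / x) ^ 2 := by
    unfold wkA
    rw [← log_div hs.ne' hx.ne', show 2 * log (sinh x / x) = log ((sinh x / x) ^ 2) by
      rw [log_pow]; push_cast; ring, exp_log (by positivity)]
  have hB : (6 * (sinh x / x) ^ 2 - 1) / 5 ≤ E⁻¹ := by
    have := one_add_mul_self_le_rpow_one_add (s := exp (2 * wkA x) - 1)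
      (by have := exp_pos (2 * wkA x); linarith) (p := 6 / 5) (by norm_num)
    rw [add_sub_cancel, ← exp_mul] at this
    rw [hE, ← exp_neg, show -(-(12 / 5) * wkA x) = 2 * wkA x * (6 / 5) by ring]
    rw [hS2] at this
    linarith
  set R := (6 * (sinh x / x) ^ 2 - 1) / 5 with hR
  have hRpos : 0 < R := by
    have : 1 < sinh x / x := (one_lt_div hx).2 hsx
    rw [hR]; nlinarith
  have hER : E * R ≤ 1 := by
    calc E * R ≤ E * E⁻¹ := by gcongr
      _ = 1 := mul_inv_cancel₀ hEpos.ne'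
  have hsq := Real.cosh_sq x
  have hb : 0 ≤ 1 / x + sinh x / cosh x - cosh x / sinh x := by
    have e : 1 / x + sinh x / cosh x - cosh x / sinh x = (sinh x * cosh x - x) / (x * sinh x * cosh x) := by
      field_simp
      rw [hsq]; ring
    rw [e]
    have : 1 ≤ cosh x := one_le_cosh x
    apply div_nonneg _ (by positivity)
    nlinarith
  have hmain : 2 * (cosh x / sinh x - 1 / x) ≤ (1 / x + sinh x / cosh x - cosh x / sinh x) * R := by
    have hk := wk_key (2 * x) (by linarith)
    rw [sinh_two_mul (2 * x), sinh_two_mul x, cosh_two_mul x] at hk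
    have e : (1 / x + sinh x / cosh x - cosh x / sinh x) * R - 2 * (cosh x / sinh x - 1 / x)
      = ((6 * sinh x ^ 2 - x ^ 2) * (sinh x * cosh x - x) - 10 * x ^ 2 * cosh x * (x * cosh x - sinh x)) / (5 * x ^ 3 * sinh x * cosh x) := by
      rw [hR]
      field_simp
      rw [hsq]; ring
    rw [← sub_nonneg, e]
    apply div_nonneg _ (by positivity)
    rw [hsq] at hk
    have e2 : cosh x * (x * cosh x - sinh x) = x * (sinh x ^ 2 + 1) - sinh x * cosh x := by
      rw [← hsq]; ring
    rw [mul_assoc, e2]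
    nlinarith
  have h5 : 2 * (cosh x / sinh x - 1 / x) * E ≤ 1 / x + sinh x / cosh x - cosh x / sinh x := by
    calc _ ≤ (1 / x + sinh x / cosh x - cosh x / sinh x) * R * E := by gcongr
      _ = (1 / x + sinh x / cosh x - cosh x / sinh x) * (E * R) := by ring
      _ ≤ (1 / x + sinh x / cosh x - cosh x / sinh x) * 1 := by gcongr
      _ = _ := mul_one _
  linarith

lemma wk_base (x : ℝ) (hx : 0 < x) : 0 ≤ 6 / 5 * wkB x - 1 + exp (-(12 / 5) * wkA x) := by
  set f : ℝ → ℝ := fun x => 6 / 5 * wkB x - 1 + exp (-(12 / 5) * wkA x) with hf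
  have hd : ∀ y, 0 < y → HasDerivAt f (6 / 5 * (1 / y + sinh y / cosh y - cosh y / sinh y)
    + exp (-(12 / 5) * wkA y) * (-(12 / 5) * (cosh y / sinh y - 1 / y))) y := by
    intro y hy
    exact (((wkB_deriv y hy).const_mul (6 / 5)).sub_const 1).add
      (((wkA_deriv y hy).const_mul (-(12 / 5))).exp)
  have hmono : MonotoneOn f (Ioi 0) := by
    apply monotoneOn_of_deriv_nonneg (convex_Ioi 0)
    · exact fun y hy => (hd y hy).continuousAt.continuousWithinAt
    · rw [interior_Ioi]
      exact fun y hy => (hd y hy).differentiableAt.differentiableWithinAt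
    · rw [interior_Ioi]
      intro y hy
      rw [(hd y hy).deriv]
      exact wk_dineq y hy
  -- lower bound tending to 0
  have hlow : ∀ y ∈ Ioc 0 x, 6 / 5 * (y ^ 2 / 2 / (1 + y ^ 2 / 2) - y ^ 2 / 6) - 1 + exp (-(12 / 5) * (y ^ 2 / 6)) ≤ f x := by
    intro y hy
    refine le_trans ?_ (hmono hy.1 hx hy.2)
    have h1 := wkB_ge y hy.1
    have h2 := wkA_le y hy.1
    have h3 : exp (-(12 / 5) * (y ^ 2 / 6)) ≤ exp (-(12 / 5) * wkA y) := exp_le_exp.2 (by linarith)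
    simp only [hf]
    linarith
  have hcont : ContinuousAt (fun y : ℝ => 6 / 5 * (y ^ 2 / 2 / (1 + y ^ 2 / 2) - y ^ 2 / 6) - 1 + exp (-(12 / 5) * (y ^ 2 / 6))) 0 := by
    have : ∀ y : ℝ, 1 + y ^ 2 / 2 ≠ 0 := fun y => by positivity
    fun_prop (disch := simp)
  have ht := hcont.tendsto.mono_left (nhdsWithin_le_nhds (s := Ioi 0))
  simp at ht
  refine le_of_tendsto ht ?_
  filter_upwards [Ioc_mem_nhdsGT hx] with y hy
  simpa [hf] using hlow y hy

lemma wk_G (t r : ℝ) (ht : 0 < t) (hr : 0 < r) :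
    (1 + t) * exp (-t * (1 - exp (-r))) < 1 + t * exp (-(1 + t) * r) := by
  set G : ℝ → ℝ := fun r => 1 + t * exp (-(1 + t) * r) - (1 + t) * exp (-t * (1 - exp (-r))) with hG
  have hd : ∀ y, HasDerivAt G (t * (exp (-(1 + t) * y) * (-(1 + t) * 1))
      - (1 + t) * (exp (-t * (1 - exp (-y))) * (-t * (-(exp (-y) * (-1)))))) y := by
    intro y
    exact ((((((hasDerivAt_id y).const_mul (-(1 + t))).exp).const_mul t).const_add 1)).sub
      (((((((hasDerivAt_id y).neg).exp).const_sub 1).const_mul (-t)).exp).const_mul (1 + t))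
  have hm : StrictMonoOn G (Ici 0) := by
    apply strictMonoOn_of_deriv_pos (convex_Ici 0)
    · exact fun y _ => (hd y).continuousAt.continuousWithinAt
    · rw [interior_Ici]
      intro y hy
      have hy : 0 < y := hy
      rw [(hd y).deriv]
      have h1 : -y + 1 < exp (-y) := add_one_lt_exp (by linarith)
      have h2 : exp (-t * y) < exp (-t * (1 - exp (-y))) := exp_lt_exp.2 (by nlinarith)
      have h3 : exp (-(1 + t) * y) = exp (-t * y) * exp (-y) := by rw [← exp_add]; ring_nf
      rw [h3]
      have h4 : 0 < t * (1 + t) * exp (-y) := by positivity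
      nlinarith
  have := hm self_mem_Ici (mem_Ici.2 hr.le) hr
  simp [hG] at this
  simp
  linarith

/-- The inequality rewritten in exponential form. -/
lemma wk_iff (m p x : ℝ) (hm : 0 < m) (hx : 0 < x) :
    (2 / (-(m + 2) + 2) * (sinh x / x) ^ (-(m + 2) * p) + -(m + 2) / (-(m + 2) + 2) * (tanh x / x) ^ p < 1) ↔
    (m + 2) * exp (-wkB x * p) < m + 2 * exp (-(m + 2) * p * wkA x) := by
  have hs := sinh_pos_iff.2 hx
  have hc := cosh_pos x
  have h1 : (sinh x / x) ^ (-(m + 2) * p) = exp (-(m + 2) * p * wkA x) := by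
    rw [rpow_def_of_pos (by positivity), log_div hs.ne' hx.ne', mul_comm]; rfl
  have h2 : (tanh x / x) ^ p = exp (-wkB x * p) := by
    rw [tanh_eq_sinh_div_cosh, rpow_def_of_pos (by positivity), log_div (by positivity) hx.ne',
      log_div hs.ne' hc.ne']
    unfold wkB; ring_nf
  rw [h1, h2]
  have e : 2 / (-(m + 2) + 2) * exp (-(m + 2) * p * wkA x) + -(m + 2) / (-(m + 2) + 2) * exp (-wkB x * p)
     = ((m + 2) * exp (-wkB x * p) - 2 * exp (-(m + 2) * p * wkA x)) / m := by
    rw [show -(m + 2) + 2 = -m by ring]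
    field_simp
    ring
  rw [e, div_lt_one hm]
  constructor <;> intro h <;> linarith

lemma wk_neg_s6 (m p x : ℝ) (hm : 0 < m) (hx : 0 < x) (hp : p < 0) :
    (m + 2) * exp (-wkB x * p) < m + 2 * exp (-(m + 2) * p * wkA x) := by
  have ha := wkA_pos x hx
  have hab : wkB x ≤ 2 * wkA x := by
    have := wkAB x hx
    have h2 : 0 ≤ x ^ 4 / 15 / (cosh x + x ^ 4 / 15) := by
      have := cosh_pos x
      positivity
    linarith
  have h1 : exp (-wkB x * p) ≤ exp (2 * wkA x * -p) := exp_le_exp.2 (by nlinarith)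
  set z := wkA x * -p with hz
  have hzpos : 0 < z := mul_pos ha (by linarith)
  -- tangent line trick
  have h2 : -(2 * z) + 1 < exp (-(2 * z)) := add_one_lt_exp (by linarith)
  have h3 : m * z + 1 < exp (m * z) := add_one_lt_exp (by positivity)
  have e1 : exp (-(m + 2) * p * wkA x) = exp (2 * z) * exp (m * z) := by
    rw [← exp_add, hz]; ring_nf
  have e2 : exp (2 * wkA x * -p) = exp (2 * z) := by rw [hz]; ring_nf
  have e3 : exp (2 * z) * exp (-(2 * z)) = 1 := by rw [← exp_add]; simp
  rw [e1]
  rw [e2] at h1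
  have hE := exp_pos (2 * z)
  have h4 : exp (2 * z) * (-(2 * z) + 1) < 1 := (mul_lt_mul_of_pos_left h2 hE).trans_eq e3
  have h5 : exp (2 * z) * (m * z + 1) < exp (2 * z) * exp (m * z) := by gcongr
  nlinarith

lemma wk_pos_s6 (m p x : ℝ) (hm : 0 < m) (hx : 0 < x) (hp : 12 / (5 * m) ≤ p) :
    (m + 2) * exp (-wkB x * p) < m + 2 * exp (-(m + 2) * p * wkA x) := by
  have ha := wkA_pos x hx
  have hb := wk_base x hx
  set c := p * m / 2 with hc
  have hc1 : 6 / 5 ≤ c := by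
    rw [div_le_iff₀ (by positivity)] at hp
    rw [hc]; linarith
  have hmain : 1 - exp (-(2 * c * wkA x)) ≤ c * wkB x := by
    have := one_add_mul_self_le_rpow_one_add (s := exp (-(12 / 5) * wkA x) - 1)
      (by have := exp_pos (-(12 / 5) * wkA x); linarith) (p := c / (6 / 5))
      (by rw [le_div_iff₀ (by norm_num)]; linarith)
    rw [add_sub_cancel, ← exp_mul, show -(12 / 5) * wkA x * (c / (6 / 5)) = -(2 * c * wkA x) by ring] at this
    nlinarith
  have hG := wk_G (2 / m) (2 * c * wkA x) (by positivity) (by positivity)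
  have h1 : exp (-wkB x * p) ≤ exp (-(2 / m) * (1 - exp (-(2 * c * wkA x)))) := by
    apply exp_le_exp.2
    have e : -wkB x * p = -(2 / m) * (c * wkB x) := by rw [hc]; field_simp
    rw [e, neg_mul, neg_mul]
    apply neg_le_neg
    gcongr
  have e2 : -(m + 2) * p * wkA x = -(1 + 2 / m) * (2 * c * wkA x) := by rw [hc]; field_simp
  rw [e2]
  calc (m + 2) * exp (-wkB x * p) ≤ m * ((1 + 2 / m) * exp (-(2 / m) * (1 - exp (-(2 * c * wkA x))))) := by
        rw [← mul_assoc, show m * (1 + 2 / m) = m + 2 by field_simp]; gcongr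
    _ < m * (1 + 2 / m * exp (-(1 + 2 / m) * (2 * c * wkA x))) := by gcongr
    _ = _ := by field_simp

lemma wk_exp_le (u : ℝ) (hu : 0 ≤ u) : exp (-u) ≤ 1 - u + u ^ 2 / 2 := by
  have hm : MonotoneOn (fun u : ℝ => 1 - u + u ^ 2 / 2 - exp (-u)) (Ici 0) := by
    have hd : ∀ y, HasDerivAt (fun u : ℝ => 1 - u + u ^ 2 / 2 - exp (-u)) (-1 + y + exp (-y)) y := by
      intro y
      have := ((((hasDerivAt_id y).const_sub 1).add (((hasDerivAt_id y).pow 2).div_const 2)).sub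
        (((hasDerivAt_id y).neg).exp))
      refine this.congr_deriv ?_
      simp only [id, Nat.cast_ofNat, Pi.neg_apply]
      ring
    apply monotoneOn_of_deriv_nonneg (convex_Ici 0)
    · exact fun y _ => (hd y).continuousAt.continuousWithinAt
    · exact fun y _ => (hd y).differentiableAt.differentiableWithinAt
    · intro y _
      rw [(hd y).deriv]
      have := add_one_le_exp (-y)
      linarith
  have := hm self_mem_Ici (mem_Ici.2 hu) hu
  simp at this
  linarith

lemma wk_exp_ge (u : ℝ) (hu : 0 ≤ u) : 1 - u + u ^ 2 / 2 - u ^ 3 / 6 ≤ exp (-u) := by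
  have hm : MonotoneOn (fun u : ℝ => exp (-u) - (1 - u + u ^ 2 / 2 - u ^ 3 / 6)) (Ici 0) := by
    have hd : ∀ y, HasDerivAt (fun u : ℝ => exp (-u) - (1 - u + u ^ 2 / 2 - u ^ 3 / 6))
        (-exp (-y) - (-1 + y - y ^ 2 / 2)) y := by
      intro y
      have := ((((hasDerivAt_id y).neg).exp)).sub
        ((((hasDerivAt_id y).const_sub 1).add (((hasDerivAt_id y).pow 2).div_const 2)).sub
          (((hasDerivAt_id y).pow 3).div_const 6))
      refine this.congr_deriv ?_
      simp only [id, Nat.cast_ofNat, Pi.neg_apply]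
      ring
    apply monotoneOn_of_deriv_nonneg (convex_Ici 0)
    · exact fun y _ => (hd y).continuousAt.continuousWithinAt
    · exact fun y _ => (hd y).differentiableAt.differentiableWithinAt
    · rw [interior_Ici]
      intro y hy
      rw [(hd y).deriv]
      have := wk_exp_le y (le_of_lt hy)
      linarith
  have := hm self_mem_Ici (mem_Ici.2 hu) hu
  simp at this
  linarith

lemma wk_nec (m p : ℝ) (hm : 0 < m) (hp : 0 < p)
    (h : ∀ x : ℝ, 0 < x → (m + 2) * exp (-wkB x * p) < m + 2 * exp (-(m + 2) * p * wkA x)) :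
    12 / (5 * m) ≤ p := by
  by_contra hlt
  rw [not_le, lt_div_iff₀ (by positivity)] at hlt
  set φ : ℝ → ℝ := fun x => 1 / 15 / (cosh x + x ^ 4 / 15)
    + p / 2 * (1 / 2 / (1 + x ^ 2 / 2) - 1 / 6) ^ 2 - x ^ 2 * p ^ 2 / 162 - (m + 2) * p / 36 with hφ
  have hcont : ContinuousAt φ 0 := by
    have : ContinuousAt cosh (0 : ℝ) := Real.continuous_cosh.continuousAt
    simp only [hφ]
    fun_prop (disch := simp)
  have h0 : 0 < φ 0 := by
    simp only [hφ]
    norm_num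
    linarith
  have hev : ∀ᶠ x in nhdsWithin 0 (Ioi 0), 0 < φ x :=
    (hcont.tendsto.mono_left nhdsWithin_le_nhds).eventually (lt_mem_nhds h0)
  obtain ⟨x, hφx, hx0, hx1⟩ := (hev.and (Ioo_mem_nhdsGT (zero_lt_one' ℝ))).exists
  have hx := h x hx0
  have ha := wkA_pos x hx0
  have ha2 := wkA_le x hx0
  have hab := wkAB x hx0
  have hb := wkB_ge x hx0
  have hc := cosh_pos x
  set a := wkA x
  set b := wkB x
  have hb0 : x ^ 2 * (1 / 2 / (1 + x ^ 2 / 2) - 1 / 6) ≤ b := by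
    refine le_trans (le_of_eq ?_) hb
    ring
  have hq : 0 ≤ 1 / 2 / (1 + x ^ 2 / 2) - 1 / 6 := by
    rw [sub_nonneg, le_div_iff₀ (by positivity)]
    nlinarith
  have hbn : 0 ≤ b := le_trans (by positivity) hb0
  have hb2 : (x ^ 2 * (1 / 2 / (1 + x ^ 2 / 2) - 1 / 6)) ^ 2 ≤ b ^ 2 :=
    pow_le_pow_left₀ (by positivity) hb0 2
  have hbu : b ≤ x ^ 2 / 3 := by
    have : 0 ≤ x ^ 4 / 15 / (cosh x + x ^ 4 / 15) := by positivity
    linarith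
  have hb3 : b ^ 3 ≤ (x ^ 2 / 3) ^ 3 := pow_le_pow_left₀ hbn hbu 3
  have haa : a ^ 2 ≤ (x ^ 2 / 6) ^ 2 := pow_le_pow_left₀ ha.le ha2 2
  have e1 := wk_exp_ge (b * p) (by positivity)
  have e2 := wk_exp_le ((m + 2) * p * a) (by positivity)
  rw [show -(b * p) = -b * p by ring] at e1
  rw [show -((m + 2) * p * a) = -(m + 2) * p * a by ring] at e2
  have hneg : (m + 2) * p * ((2 * a - b) + b ^ 2 * p / 2 - b ^ 3 * p ^ 2 / 6 - (m + 2) * a ^ 2 * p) < 0 := by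
    have := mul_le_mul_of_nonneg_left e1 (show 0 ≤ m + 2 by linarith)
    nlinarith
  have hneg2 : (2 * a - b) + b ^ 2 * p / 2 - b ^ 3 * p ^ 2 / 6 - (m + 2) * a ^ 2 * p < 0 := by
    by_contra hcon
    rw [not_lt] at hcon
    have : 0 ≤ (m + 2) * p := by positivity
    have := mul_nonneg this hcon
    linarith
  have hpos : 0 < x ^ 4 * φ x := by positivity
  have e4 : x ^ 4 * φ x = x ^ 4 / 15 / (cosh x + x ^ 4 / 15)
    + (x ^ 2 * (1 / 2 / (1 + x ^ 2 / 2) - 1 / 6)) ^ 2 * (p / 2) - (x ^ 2 / 3) ^ 3 * (p ^ 2 / 6)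
    - (x ^ 2 / 6) ^ 2 * ((m + 2) * p) := by
    simp only [hφ]; ring
  have i1 := mul_le_mul_of_nonneg_right hb2 (show 0 ≤ p / 2 by positivity)
  have i2 := mul_le_mul_of_nonneg_right hb3 (show 0 ≤ p ^ 2 / 6 by positivity)
  have i3 := mul_le_mul_of_nonneg_right haa (show 0 ≤ (m + 2) * p by positivity)
  linarith

theorem wilker_hyp_lt (k : ℝ) (hk : k < -2) (p : ℝ) (hp : p ≠ 0) :
    (∀ x ∈ Ioi (0 : ℝ),
        2 / (k + 2) * (sinh x / x) ^ (k * p) + k / (k + 2) * (tanh x / x) ^ p < 1) ↔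
      (p < 0 ∨ p ≥ -(12 / (5 * (k + 2)))) := by
  obtain ⟨m, rfl⟩ : ∃ m, k = -(m + 2) := ⟨-k - 2, by ring⟩
  have hm : 0 < m := by linarith
  have e : -(12 / (5 * (-(m + 2) + 2))) = 12 / (5 * m) := by
    rw [show 5 * (-(m + 2) + 2) = -(5 * m) by ring, div_neg, neg_neg]
  rw [e]
  constructor
  · intro h
    rcases lt_or_gt_of_ne hp with h1 | h1
    · exact Or.inl h1
    · exact Or.inr (wk_nec m p hm h1 fun x hx => (wk_iff m p x hm hx).1 (h x hx))
  · rintro (h | h) x hx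
    · exact (wk_iff m p x hm hx).2 (wk_neg_s6 m p x hm hx h)
    · exact (wk_iff m p x hm hx).2 (wk_pos_s6 m p x hm hx h)
end
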